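/- Let a > 5 + 2√5 and r = 1 + √(1+a). For x, y ∈ [−r,r] define the eight real numbers t₁ = √(a − y + √(a − x + r)), t₂ = √(a − y + √(a − x − r)), t₃ = √(a − y − √(a − x − r)), t₄ = √(a − y − √(a − x + r)), t₅ = −t₄, t₆ = −t₃, t₇ = −t₂, t₈ = −t₁. Then all eight quantities under the square roots are strictly positive, and t₁ > t₂ > t₃ > t₄ > t₅ > t₆ > t₇ > t₈; in particular, for any w ∈ ℝ the eight values −w² + a + t_j, j = 1,…,8, are strictly decreasing in j. -/

import Mathlib

/-!
Put `u = a - x + r` and `v = a - x - r`. If `0 < v < u` and `√u < a - y`, then all four radicands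
`a - y ± √u`, `a - y ± √v` are positive, and the ordering is just monotonicity of the square root.
The number `1 + √(1 + a)` is the positive root of `r ^ 2 = a + 2 * r`, so for `r` at least this
large `-r ≤ x` gives `u ≤ a + 2 * r ≤ r ^ 2`, that is `√u ≤ r`. If moreover `2 * r < a`, then
`r < a - r ≤ a - y` for `y ≤ r`, and `v > 0` for `x ≤ r`.
-/

section

variable {a r x y : ℝ}

theorem two_mul_one_add_sqrt_lt_iff : 2 * (1 + √(1 + a)) < a ↔ 8 < a := by
  rcases lt_or_ge a (-1) with ha | ha
  · have := Real.sqrt_nonneg (1 + a)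
    constructor <;> intro h <;> linarith
  · have hsq : √(1 + a) ^ 2 = 1 + a := Real.sq_sqrt (by linarith)
    have hfactor : a - 2 * (1 + √(1 + a)) = (√(1 + a) + 1) * (√(1 + a) - 3) := by linarith
    calc 2 * (1 + √(1 + a)) < a
        ↔ 0 < (√(1 + a) + 1) * (√(1 + a) - 3) := by rw [← hfactor, sub_pos]
      _ ↔ 3 < √(1 + a) := by rw [mul_pos_iff_of_pos_left (by positivity), sub_pos]
      _ ↔ 8 < a := by
        rw [Real.lt_sqrt (by norm_num)]
        constructor <;> intro h <;> linarith

theorem eight_lt_five_add_two_mul_sqrt_five : 8 < 5 + 2 * √5 := by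
  have : 2 < √5 := Real.lt_sqrt_of_sq_lt (by norm_num)
  linarith

theorem add_two_mul_le_sq (hr : 1 + √(1 + a) ≤ r) : a + 2 * r ≤ r ^ 2 := by
  have : 1 + a ≤ (r - 1) ^ 2 := (Real.sqrt_le_iff.mp (le_sub_iff_add_le'.mpr hr)).2
  linarith

theorem sqrt_sub_add_lt_sub (hr : 1 + √(1 + a) ≤ r) (hra : 2 * r < a) (hx : -r ≤ x) (hy : y ≤ r) :
    √(a - x + r) < a - y := by
  have hr0 : 0 ≤ r := by linarith [Real.sqrt_nonneg (1 + a)]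
  have hsq := add_two_mul_le_sq hr
  calc √(a - x + r) ≤ r := Real.sqrt_le_iff.mpr ⟨hr0, by linarith⟩
    _ < a - y := by linarith

theorem sqrt_sub_lt_sqrt_sub_lt_sqrt_add_lt_sqrt_add {b p q : ℝ}
    (hp : 0 < p) (hpq : p < q) (hqb : q ≤ b) :
    √(b - q) < √(b - p) ∧ √(b - p) < √(b + p) ∧ √(b + p) < √(b + q) := by
  refine ⟨Real.sqrt_lt_sqrt ?_ ?_, Real.sqrt_lt_sqrt ?_ ?_, Real.sqrt_lt_sqrt ?_ ?_⟩ <;> linarith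

theorem stmt_15_general (hr : 1 + √(1 + a) ≤ r) (hra : 2 * r < a)
    (hx : x ∈ Set.Icc (-r) r) (hy : y ≤ r) :
    ∀ t₁ t₂ t₃ t₄ t₅ t₆ t₇ t₈ : ℝ,
      t₁ = √(a - y + √(a - x + r)) →
      t₂ = √(a - y + √(a - x - r)) →
      t₃ = √(a - y - √(a - x - r)) →
      t₄ = √(a - y - √(a - x + r)) →
      t₅ = -t₄ → t₆ = -t₃ → t₇ = -t₂ → t₈ = -t₁ →
      (0 < a - x + r ∧ 0 < a - x - r ∧
       0 < a - y + √(a - x + r) ∧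
       0 < a - y + √(a - x - r) ∧
       0 < a - y - √(a - x - r) ∧
       0 < a - y - √(a - x + r)) ∧
      (t₁ > t₂ ∧ t₂ > t₃ ∧ t₃ > t₄ ∧ t₄ > t₅ ∧ t₅ > t₆ ∧ t₆ > t₇ ∧ t₇ > t₈) ∧
      (∀ w : ℝ,
        -w ^ 2 + a + t₁ > -w ^ 2 + a + t₂ ∧
        -w ^ 2 + a + t₂ > -w ^ 2 + a + t₃ ∧
        -w ^ 2 + a + t₃ > -w ^ 2 + a + t₄ ∧
        -w ^ 2 + a + t₄ > -w ^ 2 + a + t₅ ∧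
        -w ^ 2 + a + t₅ > -w ^ 2 + a + t₆ ∧
        -w ^ 2 + a + t₆ > -w ^ 2 + a + t₇ ∧
        -w ^ 2 + a + t₇ > -w ^ 2 + a + t₈) := by
  intro t₁ t₂ t₃ t₄ t₅ t₆ t₇ t₈ h₁ h₂ h₃ h₄ h₅ h₆ h₇ h₈
  have hv : 0 < a - x - r := by linarith [hx.2]
  have hvu : a - x - r < a - x + r := by linarith [Real.sqrt_nonneg (1 + a)]
  have hsqrt_v : 0 < √(a - x - r) := Real.sqrt_pos.mpr hv
  have hsqrt_vu : √(a - x - r) < √(a - x + r) := Real.sqrt_lt_sqrt hv.le hvu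
  have hsqrt_u : √(a - x + r) < a - y := sqrt_sub_add_lt_sub hr hra hx.1 hy
  have ht₄ : 0 < t₄ := h₄ ▸ Real.sqrt_pos.mpr (sub_pos.mpr hsqrt_u)
  obtain ⟨ht₄₃, ht₃₂, ht₂₁⟩ : t₄ < t₃ ∧ t₃ < t₂ ∧ t₂ < t₁ := by
    rw [h₁, h₂, h₃, h₄]
    exact sqrt_sub_lt_sqrt_sub_lt_sqrt_add_lt_sqrt_add hsqrt_v hsqrt_vu hsqrt_u.le
  refine ⟨⟨hv.trans hvu, hv, ?_, ?_, ?_, sub_pos.mpr hsqrt_u⟩,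
    ⟨ht₂₁, ht₃₂, ht₄₃, ?_, ?_, ?_, ?_⟩, fun w => ⟨?_, ?_, ?_, ?_, ?_, ?_, ?_⟩⟩ <;> linarith

end

/-- the eight bounding parabolas of the triply folded horseshoe
are strictly ordered from right to left. -/
theorem stmt_15 (a : ℝ) (ha : a > 5 + 2 * Real.sqrt 5)
    (r : ℝ) (hr : r = 1 + Real.sqrt (1 + a)) :
    ∀ x ∈ Set.Icc (-r) r, ∀ y ∈ Set.Icc (-r) r,
    ∀ t₁ t₂ t₃ t₄ t₅ t₆ t₇ t₈ : ℝ,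
      t₁ = Real.sqrt (a - y + Real.sqrt (a - x + r)) →
      t₂ = Real.sqrt (a - y + Real.sqrt (a - x - r)) →
      t₃ = Real.sqrt (a - y - Real.sqrt (a - x - r)) →
      t₄ = Real.sqrt (a - y - Real.sqrt (a - x + r)) →
      t₅ = -t₄ → t₆ = -t₃ → t₇ = -t₂ → t₈ = -t₁ →
      (0 < a - x + r ∧ 0 < a - x - r ∧
       0 < a - y + Real.sqrt (a - x + r) ∧
       0 < a - y + Real.sqrt (a - x - r) ∧
       0 < a - y - Real.sqrt (a - x - r) ∧
       0 < a - y - Real.sqrt (a - x + r)) ∧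
      (t₁ > t₂ ∧ t₂ > t₃ ∧ t₃ > t₄ ∧ t₄ > t₅ ∧ t₅ > t₆ ∧ t₆ > t₇ ∧ t₇ > t₈) ∧
      (∀ w : ℝ,
        -w ^ 2 + a + t₁ > -w ^ 2 + a + t₂ ∧
        -w ^ 2 + a + t₂ > -w ^ 2 + a + t₃ ∧
        -w ^ 2 + a + t₃ > -w ^ 2 + a + t₄ ∧
        -w ^ 2 + a + t₄ > -w ^ 2 + a + t₅ ∧
        -w ^ 2 + a + t₅ > -w ^ 2 + a + t₆ ∧
        -w ^ 2 + a + t₆ > -w ^ 2 + a + t₇ ∧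
        -w ^ 2 + a + t₇ > -w ^ 2 + a + t₈) := by
  intro x hx y hy
  have hra : 2 * r < a :=
    hr ▸ two_mul_one_add_sqrt_lt_iff.mpr (eight_lt_five_add_two_mul_sqrt_five.trans ha)
  exact stmt_15_general hr.ge hra hx hy.2
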